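/- Let p be a prime, r ∈ ℕ_{≥2}, R = ℤ/p^rℤ with maximal ideal I = pR, and let m > 2 be an integer. Then σ_{2m}(r) = p^{(m−1)r} · [r−1]_{p^{m−2}} − p^{(m−1)r − 1} · [r−2]_{p^{m−2}}, where [k]_q := (q^k − 1)/(q − 1). -/

import Mathlib

open Matrix

/-- `η(a)` is the matrix `![![a, -1], ![1, 0]]`. -/
def eta {R : Type*} [CommRing R] (a : R) : Matrix (Fin 2) (Fin 2) R := !![a, -1; 1, 0]

/-- `[c₁, …, cₙ] = η(c₁)·η(c₂)⋯η(cₙ)`. -/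
def prodEta {R : Type*} [CommRing R] {n : ℕ} (c : Fin n → R) : Matrix (Fin 2) (Fin 2) R :=
  (List.ofFn fun i => eta (c i)).prod


/-- `σ_n(ℓ) := |σ_{(-1)^(n/2)+p^ℓ, n}|`: the number of tuples `(c₁, …, cₙ) ∈ Iⁿ`
(`I = pR ⊆ R = ℤ/p^rℤ`) with `[c₁, …, cₙ] = diag(z, z⁻¹)` for `z = (-1)^(n/2) + p^ℓ`. -/
noncomputable def sigmaCount (p r n ℓ : ℕ) : ℕ :=
  Nat.card {c : Fin n → ZMod (p ^ r) //
    (∀ i, c i ∈ Ideal.span {(p : ZMod (p ^ r))}) ∧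
    prodEta c = !![(-1) ^ (n / 2) + (p : ZMod (p ^ r)) ^ ℓ, 0;
                   0, Ring.inverse ((-1) ^ (n / 2) + (p : ZMod (p ^ r)) ^ ℓ)]}

/-- The q-integer `[k]_q = 1 + q + ⋯ + q^(k-1) = (q^k - 1)/(q - 1)`. -/
def qInt (k q : ℕ) : ℕ := ∑ i ∈ Finset.range k, q ^ i

/-!
Splitting the first two entries `x, y ∈ I` off a tuple multiplies the target matrix `M` by
`-(η(x)η(y))⁻¹ ≡ 1 mod I`, which changes the lower right entry `d` of `M` by `-(xd - b)y`, where `b`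
is the upper right entry. As `d` is a unit and `b ∈ I`, the substitution `x ↦ xd - b` permutes `I`,
so by induction the tuples in `I²ᵐ` with product `(-1)ᵐ` correspond to the pairs `a, c ∈ Iᵐ⁻¹` with
`a₁c₁ + ⋯ + aₖcₖ = 0`, `k = m - 1`.

For fixed `a` the solutions `c ∈ Iᵏ` are the kernel of a homomorphism onto `I · (a₁, …, aₖ)`, so
there are `|I|ᵏ / |I · (a₁, …, aₖ)|` of them. If `I = 𝔪` is the principal maximal ideal of a finite
local ring, every `a` with entries in `𝔪ˢ` but not all in `𝔪ˢ⁺¹` generates `𝔪ˢ`; summing over `s`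
gives the geometric sums in the theorem.
-/

open IsLocalRing

section Eta

variable {R : Type*} [CommRing R] {I : Ideal R}

/-- The set `{c ∈ Iⁿ : [c₁, …, cₙ] = M}`; the paper's `σ_{z,n}` is the case `M = diag(z, z⁻¹)`. -/
def etaTuples (I : Ideal R) (n : ℕ) (M : Matrix (Fin 2) (Fin 2) R) : Set (Fin n → R) :=
  {c | (∀ i, c i ∈ I) ∧ prodEta c = M}

/-- The set of pairs of vectors `a ∈ Jᵏ`, `c ∈ Iᵏ` with `a₁c₁ + ⋯ + aₖcₖ = b`. The two ideals are
kept apart because the count is by descent on `J` with `I` fixed. -/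
def dotPairs (J I : Ideal R) (k : ℕ) (b : R) : Set ((Fin k → R) × (Fin k → R)) :=
  {x | (∀ i, x.1 i ∈ J) ∧ (∀ i, x.2 i ∈ I) ∧ x.1 ⬝ᵥ x.2 = b}

/-- The matrix `-(η(x) η(y))⁻¹`, by which the target changes when `x, y` are split off a tuple. -/
def negEtaPairInv (x y : R) : Matrix (Fin 2) (Fin 2) R := !![1, -x; y, 1 - x * y]

lemma eta_mul_eta (x y : R) : eta x * eta y = !![x * y - 1, -x; y, -1] := by
  simp [eta, sub_eq_add_neg]

lemma eta_mul_eta_mul_negEtaPairInv (x y : R) : eta x * eta y * negEtaPairInv x y = -1 := by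
  rw [eta_mul_eta, negEtaPairInv, one_fin_two]
  ext i j
  fin_cases i <;> fin_cases j <;> simp <;> ring

lemma det_negEtaPairInv (x y : R) : (negEtaPairInv x y).det = 1 := by
  rw [negEtaPairInv, det_fin_two_of]
  ring

lemma mapMatrix_mk_negEtaPairInv {x y : R} (hx : x ∈ I) (hy : y ∈ I) :
    (Ideal.Quotient.mk I).mapMatrix (negEtaPairInv x y) = 1 := by
  ext i j
  fin_cases i <;> fin_cases j <;>
    simp [negEtaPairInv, Ideal.Quotient.eq_zero_iff_mem.2 hx, Ideal.Quotient.eq_zero_iff_mem.2 hy]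

lemma negEtaPairInv_mul_apply_one_one (x y : R) (M : Matrix (Fin 2) (Fin 2) R) :
    (negEtaPairInv x y * M) 1 1 - 1 = M 1 1 - 1 - (x * M 1 1 - M 0 1) * y := by
  simp only [negEtaPairInv, mul_apply, Fin.sum_univ_two, of_apply, cons_val_zero, cons_val_one]
  ring

lemma eta_mul_eta_mul_eq_neg_iff (x y : R) (P M : Matrix (Fin 2) (Fin 2) R) :
    eta x * (eta y * P) = -M ↔ P = negEtaPairInv x y * M := by
  have right_inv := eta_mul_eta_mul_negEtaPairInv x y
  have left_inv : negEtaPairInv x y * (eta x * eta y) = -1 := by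
    rw [eq_neg_iff_add_eq_zero, ← neg_eq_iff_add_eq_zero, ← mul_neg, mul_eq_one_comm, neg_mul,
      right_inv, neg_neg]
  rw [← mul_assoc]
  constructor
  · intro h
    rw [← neg_inj, ← mul_neg, ← h, ← mul_assoc, left_inv, neg_one_mul]
  · rintro rfl
    rw [← mul_assoc, right_inv, neg_one_mul]

lemma prodEta_cons {n : ℕ} (x : R) (c : Fin n → R) :
    prodEta (Fin.cons x c : Fin (n + 1) → R) = eta x * prodEta c := by
  simp [prodEta, List.ofFn_succ]

lemma cons_cons_mem_etaTuples_neg {n : ℕ} {x y : R} {c : Fin n → R}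
    {M : Matrix (Fin 2) (Fin 2) R} :
    (Fin.cons x (Fin.cons y c : Fin (n + 1) → R) : Fin (n + 2) → R) ∈ etaTuples I (n + 2) (-M) ↔
      x ∈ I ∧ y ∈ I ∧ c ∈ etaTuples I n (negEtaPairInv x y * M) := by
  simp only [etaTuples, Set.mem_ofPred_eq, Fin.forall_fin_succ, Fin.cons_zero, Fin.cons_succ,
    prodEta_cons, eta_mul_eta_mul_eq_neg_iff, and_assoc]

lemma cons_cons_mem_dotPairs {J : Ideal R} {k : ℕ} {x y b : R} {a c : Fin k → R} :
    ((Fin.cons x a, Fin.cons y c) : (Fin (k + 1) → R) × (Fin (k + 1) → R)) ∈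
        dotPairs J I (k + 1) b ↔
      x ∈ J ∧ y ∈ I ∧ (a, c) ∈ dotPairs J I k (b - x * y) := by
  have split_dot : (Fin.cons x a : Fin (k + 1) → R) ⬝ᵥ (Fin.cons y c : Fin (k + 1) → R) =
      x * y + a ⬝ᵥ c := cons_dotProduct_cons x a y c
  simp only [dotPairs, Set.mem_ofPred_eq, Fin.forall_fin_succ, Fin.cons_zero, Fin.cons_succ,
    split_dot, eq_sub_iff_add_eq', and_assoc]
  tauto

/-- Splitting the first two entries off a tuple. -/
def etaTuplesAddTwoEquiv (I : Ideal R) (n : ℕ) (M : Matrix (Fin 2) (Fin 2) R) :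
    etaTuples I (n + 2) (-M) ≃
      Σ xy : I × I, etaTuples I n (negEtaPairInv (xy.1 : R) xy.2 * M) where
  toFun c :=
    have h := cons_cons_mem_etaTuples_neg.1
      (by simpa only [Fin.cons_self_tail] using c.2 : Fin.cons (c.1 0) (Fin.cons (Fin.tail c.1 0)
        (Fin.tail (Fin.tail c.1))) ∈ etaTuples I (n + 2) (-M))
    ⟨(⟨_, h.1⟩, ⟨_, h.2.1⟩), ⟨_, h.2.2⟩⟩
  invFun d := ⟨Fin.cons d.1.1 (Fin.cons d.1.2 d.2.1 : Fin (n + 1) → R),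
    cons_cons_mem_etaTuples_neg.2 ⟨d.1.1.2, d.1.2.2, d.2.2⟩⟩
  left_inv c := Subtype.ext <| by simp only [Fin.cons_self_tail]
  right_inv _ := rfl

/-- Splitting the first entries off a pair of vectors. -/
def dotPairsSuccEquiv (J I : Ideal R) (k : ℕ) (b : R) :
    dotPairs J I (k + 1) b ≃ Σ xy : J × I, dotPairs J I k (b - xy.1 * xy.2) where
  toFun x :=
    have h := cons_cons_mem_dotPairs.1
      (by simpa only [Fin.cons_self_tail] using x.2 : (Fin.cons (x.1.1 0) (Fin.tail x.1.1),
        Fin.cons (x.1.2 0) (Fin.tail x.1.2)) ∈ dotPairs J I (k + 1) b)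
    ⟨(⟨_, h.1⟩, ⟨_, h.2.1⟩), ⟨_, h.2.2⟩⟩
  invFun d := ⟨(Fin.cons d.1.1 d.2.1.1, Fin.cons d.1.2 d.2.1.2),
    cons_cons_mem_dotPairs.2 ⟨d.1.1.2, d.1.2.2, d.2.2⟩⟩
  left_inv x := Subtype.ext <| by simp only [Fin.cons_self_tail]
  right_inv _ := rfl

lemma mapMatrix_mk_eq_one_iff {M : Matrix (Fin 2) (Fin 2) R} :
    (Ideal.Quotient.mk I).mapMatrix M = 1 ↔
      M 0 0 - 1 ∈ I ∧ M 0 1 ∈ I ∧ M 1 0 ∈ I ∧ M 1 1 - 1 ∈ I := by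
  simp [← Matrix.ext_iff, Fin.forall_fin_two, and_assoc, ← Ideal.Quotient.eq_zero_iff_mem,
    sub_eq_zero]

lemma mem_etaTuples_two_neg_iff {M : Matrix (Fin 2) (Fin 2) R} (hdet : M.det = 1)
    (hM : (Ideal.Quotient.mk I).mapMatrix M = 1) {c : Fin 2 → R} :
    c ∈ etaTuples I 2 (-M) ↔ c = ![M 0 1, -M 1 0] ∧ M 1 1 = 1 := by
  obtain ⟨-, h01, h10, -⟩ := mapMatrix_mk_eq_one_iff.1 hM
  have prod_eq : prodEta c = !![c 0 * c 1 - 1, -c 0; c 1, -1] := by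
    simp [prodEta, List.ofFn_succ, eta_mul_eta]
  rw [det_fin_two] at hdet
  simp only [etaTuples, Set.mem_ofPred_eq, prod_eq, ← Matrix.ext_iff, Fin.forall_fin_two,
    funext_iff, of_apply, cons_val_zero, cons_val_one, Matrix.neg_apply, neg_inj]
  constructor
  · rintro ⟨-, ⟨-, hx⟩, hy, hd⟩
    exact ⟨⟨hx, hy⟩, hd.symm⟩
  · rintro ⟨⟨hx, hy⟩, hd⟩
    rw [hd] at hdet
    rw [hx, hy]
    exact ⟨⟨h01, I.neg_mem h10⟩, ⟨by linear_combination hdet, rfl⟩, rfl, hd.symm⟩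

/-- The affine substitution `x ↦ ux - b`, which preserves the ideal `I` when `b ∈ I`. -/
def unitMulSubEquiv (u : Rˣ) (b : I) : I ≃ I where
  toFun x := (u : R) • x - b
  invFun x := (↑u⁻¹ : R) • (x + b)
  left_inv x := by simp [smul_smul]
  right_inv x := by simp [smul_smul]

lemma isUnit_of_sub_one_mem (hI : I ≤ Ideal.jacobson ⊥) {d : R} (hd : d - 1 ∈ I) : IsUnit d := by
  simpa using Ideal.mem_jacobson_bot.1 (hI hd) 1

theorem nonempty_etaTuples_equiv_dotPairs (hI : I ≤ Ideal.jacobson ⊥) (m : ℕ)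
    (M : Matrix (Fin 2) (Fin 2) R) (hdet : M.det = 1)
    (hM : (Ideal.Quotient.mk I).mapMatrix M = 1) :
    Nonempty (etaTuples I (2 * (m + 1)) ((-1 : R) ^ (m + 1) • M) ≃
      dotPairs I I m (M 1 1 - 1)) := by
  induction m generalizing M with
  | zero =>
    have mem_eta {c : Fin 2 → R} : c ∈ etaTuples I 2 ((-1 : R) ^ (0 + 1) • M) ↔
        c = ![M 0 1, -M 1 0] ∧ M 1 1 = 1 := by
      simpa using mem_etaTuples_two_neg_iff hdet hM
    have mem_dot {x : (Fin 0 → R) × (Fin 0 → R)} :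
        x ∈ dotPairs I I 0 (M 1 1 - 1) ↔ M 1 1 = 1 := by
      simp [dotPairs, eq_comm (a := (0 : R)), sub_eq_zero]
    exact ⟨fun c => ⟨0, mem_dot.2 (mem_eta.1 c.2).2⟩, fun x => ⟨_, mem_eta.2 ⟨rfl, mem_dot.1 x.2⟩⟩,
      fun c => Subtype.ext (mem_eta.1 c.2).1.symm, fun _ => Subtype.ext (Subsingleton.elim _ _)⟩
  | succ m ih =>
    obtain ⟨-, h01, -, h11⟩ := mapMatrix_mk_eq_one_iff.1 hM
    obtain ⟨u, hu⟩ := isUnit_of_sub_one_mem hI h11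
    have fiber_equiv (xy : I × I) :
        Nonempty (etaTuples I (2 * (m + 1))
            (negEtaPairInv (xy.1 : R) xy.2 * (-1 : R) ^ (m + 1) • M) ≃
          dotPairs I I m (M 1 1 - 1 - unitMulSubEquiv u ⟨_, h01⟩ xy.1 * xy.2)) := by
      have target_eq : M 1 1 - 1 - (unitMulSubEquiv u ⟨_, h01⟩ xy.1 : R) * xy.2 =
          (negEtaPairInv (xy.1 : R) xy.2 * M) 1 1 - 1 := by
        simp [negEtaPairInv_mul_apply_one_one, unitMulSubEquiv, hu, mul_comm]
      rw [target_eq, mul_smul_comm]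
      refine ih _ ?_ ?_
      · rw [det_mul, det_negEtaPairInv, hdet, one_mul]
      · rw [map_mul, mapMatrix_mk_negEtaPairInv xy.1.2 xy.2.2, hM, one_mul]
    have sign_eq : (-1 : R) ^ (m + 1 + 1) • M = -((-1 : R) ^ (m + 1) • M) := by
      rw [pow_succ, mul_neg_one, neg_smul]
    rw [sign_eq]
    exact ⟨(etaTuplesAddTwoEquiv I (2 * (m + 1)) _).trans <|
      (Equiv.sigmaCongr ((unitMulSubEquiv u ⟨_, h01⟩).prodCongr (Equiv.refl I))
        fun xy => (fiber_equiv xy).some).trans (dotPairsSuccEquiv I I m _).symm⟩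

theorem card_etaTuples_neg_one_pow (hI : I ≤ Ideal.jacobson ⊥) (m : ℕ) :
    Nat.card (etaTuples I (2 * (m + 1)) ((-1 : R) ^ (m + 1) • 1)) =
      Nat.card (dotPairs I I m 0) := by
  obtain ⟨e⟩ := nonempty_etaTuples_equiv_dotPairs hI m 1 det_one (map_one _)
  rw [Nat.card_congr e, one_apply_eq, sub_self]

end Eta

section Count

variable {R : Type*} [CommRing R]

/-- The vectors `Iᵏ ⊆ Rᵏ` with all entries in `I`, as an ideal of the product ring. -/
abbrev vectorIdeal (I : Ideal R) (k : ℕ) : Ideal (Fin k → R) := Ideal.pi fun _ => I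

lemma card_vectorIdeal (I : Ideal R) (k : ℕ) : Nat.card (vectorIdeal I k) = Nat.card I ^ k := by
  rw [← Nat.card_fin k, ← Nat.card_fun, Nat.card_fin]
  exact Nat.card_congr (Equiv.subtypePiEquivPi (p := fun (_ : Fin k) x => x ∈ I))

lemma exists_dotProduct_eq_iff (I : Ideal R) {k : ℕ} (a : Fin k → R) (x : R) :
    (∃ c ∈ vectorIdeal I k, a ⬝ᵥ c = x) ↔ x ∈ I * Ideal.span (Set.range a) := by
  refine Iff.trans ?_ (Submodule.mem_ideal_smul_span_iff_exists_sum I a x).symm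
  rw [← Finsupp.equivFunOnFinite.exists_congr_right]
  simp [Ideal.mem_pi, dotProduct, Finsupp.sum_fintype, mul_comm]

/-- The annihilator `{c ∈ Iᵏ : a₁c₁ + ⋯ + aₖcₖ = 0}` of the vector `a`. -/
def dotKernel (I : Ideal R) {k : ℕ} (a : Fin k → R) : Set (Fin k → R) :=
  {c | c ∈ vectorIdeal I k ∧ a ⬝ᵥ c = 0}

-- First isomorphism theorem for `c ↦ a ⬝ᵥ c` on `Iᵏ`, whose image is `I · (a₁, …, aₖ)`.
lemma card_dotKernel_mul_card (I : Ideal R) {k : ℕ} (a : Fin k → R) :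
    Nat.card (dotKernel I a) * Nat.card (I * Ideal.span (Set.range a) : Ideal R) =
      Nat.card I ^ k := by
  let dotHom : vectorIdeal I k →+ R :=
    AddMonoidHom.mk' (fun c => a ⬝ᵥ c) fun c d => dotProduct_add a c d
  have card_ker : Nat.card dotHom.ker = Nat.card (dotKernel I a) :=
    Nat.card_congr (Equiv.subtypeSubtypeEquivSubtypeInter _ fun c => a ⬝ᵥ c = 0)
  have range_eq : dotHom.range = (I * Ideal.span (Set.range a)).toAddSubgroup := by
    ext x
    rw [Submodule.mem_toAddSubgroup, ← exists_dotProduct_eq_iff]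
    simp [dotHom]
  have card_range : Nat.card dotHom.range = Nat.card (I * Ideal.span (Set.range a) : Ideal R) :=
    congrArg (fun H : AddSubgroup R => Nat.card H) range_eq
  rw [← card_ker, ← card_range, ← AddSubgroup.index_ker, AddSubgroup.card_mul_index,
    card_vectorIdeal]

lemma span_range_eq_of_mem_sdiff {J J' : Ideal R} (hJ : ∀ K ≤ J, K ≤ J' ∨ K = J) {k : ℕ}
    {a : Fin k → R} (ha : a ∈ (vectorIdeal J k \ vectorIdeal J' k : Set (Fin k → R))) :
    Ideal.span (Set.range a) = J := by
  refine (hJ _ (Ideal.span_le.2 (Set.range_subset_iff.2 ha.1))).resolve_left fun hle => ha.2 ?_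
  exact fun i => hle (Ideal.subset_span (Set.mem_range_self i))

lemma dotPairs_mono_left {J J' : Ideal R} (h : J' ≤ J) (I : Ideal R) (k : ℕ) (b : R) :
    dotPairs J' I k b ⊆ dotPairs J I k b :=
  fun _ hx => ⟨fun i => h (hx.1 i), hx.2⟩

lemma mem_dotPairs_sdiff_iff {J J' I : Ideal R} {k : ℕ} {x : (Fin k → R) × (Fin k → R)} :
    x ∈ dotPairs J I k 0 \ dotPairs J' I k 0 ↔
      x.1 ∈ (vectorIdeal J k \ vectorIdeal J' k : Set (Fin k → R)) ∧ x.2 ∈ dotKernel I x.1 := by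
  simp only [dotPairs, dotKernel, Set.mem_sdiff, Set.mem_ofPred_eq, SetLike.mem_coe, Ideal.mem_pi]
  tauto

/-- Grouping the pairs in `dotPairs J I k 0` outside `dotPairs J' I k 0` by their first vector. -/
def dotPairsSdiffEquiv (J J' I : Ideal R) (k : ℕ) :
    ↥(dotPairs J I k 0 \ dotPairs J' I k 0) ≃
      Σ a : ↥(vectorIdeal J k \ vectorIdeal J' k : Set (Fin k → R)), dotKernel I a.1 where
  toFun x := ⟨⟨x.1.1, (mem_dotPairs_sdiff_iff.1 x.2).1⟩, ⟨x.1.2, (mem_dotPairs_sdiff_iff.1 x.2).2⟩⟩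
  invFun d := ⟨(d.1.1, d.2.1), mem_dotPairs_sdiff_iff.2 ⟨d.1.2, d.2.2⟩⟩

lemma card_dotPairs_sdiff_mul_card [Finite R] {J J' : Ideal R}
    (hJ : ∀ K ≤ J, K ≤ J' ∨ K = J) (I : Ideal R) (k : ℕ) :
    Nat.card ↥(dotPairs J I k 0 \ dotPairs J' I k 0) * Nat.card (I * J : Ideal R) =
      Nat.card ↥(vectorIdeal J k \ vectorIdeal J' k : Set (Fin k → R)) * Nat.card I ^ k := by
  have := Fintype.ofFinite ↥(vectorIdeal J k \ vectorIdeal J' k : Set (Fin k → R))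
  have card_fiber (a : ↥(vectorIdeal J k \ vectorIdeal J' k : Set (Fin k → R))) :
      Nat.card (dotKernel I a.1) * Nat.card (I * J : Ideal R) = Nat.card I ^ k := by
    rw [← card_dotKernel_mul_card I a.1, span_range_eq_of_mem_sdiff hJ a.2]
  rw [Nat.card_congr (dotPairsSdiffEquiv J J' I k), Nat.card_sigma, Finset.sum_mul,
    Finset.sum_congr rfl fun a _ => card_fiber a, Finset.sum_const, smul_eq_mul, Finset.card_univ,
    ← Nat.card_eq_fintype_card]

theorem card_dotPairs_mul_card_add [Finite R] {J J' : Ideal R} (hle : J' ≤ J)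
    (hJ : ∀ K ≤ J, K ≤ J' ∨ K = J) (I : Ideal R) (k : ℕ) :
    Nat.card (dotPairs J I k 0) * Nat.card (I * J : Ideal R) + Nat.card J' ^ k * Nat.card I ^ k =
      Nat.card (dotPairs J' I k 0) * Nat.card (I * J : Ideal R) +
        Nat.card J ^ k * Nat.card I ^ k := by
  have split_pairs : Nat.card ↥(dotPairs J I k 0 \ dotPairs J' I k 0) +
      Nat.card (dotPairs J' I k 0) = Nat.card (dotPairs J I k 0) :=
    Set.ncard_sdiff_add_ncard_of_subset (dotPairs_mono_left hle I k 0)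
  have split_vectors : Nat.card ↥(vectorIdeal J k \ vectorIdeal J' k : Set (Fin k → R)) +
      Nat.card (vectorIdeal J' k) = Nat.card (vectorIdeal J k) :=
    Set.ncard_sdiff_add_ncard_of_subset fun _ ha i => hle (ha i)
  rw [card_vectorIdeal, card_vectorIdeal] at split_vectors
  rw [← split_pairs, ← split_vectors, add_mul, card_dotPairs_sdiff_mul_card hJ]
  ring

lemma card_dotPairs_bot (I : Ideal R) (k : ℕ) :
    Nat.card (dotPairs ⊥ I k 0) = Nat.card I ^ k := by
  have dotPairs_eq : dotPairs ⊥ I k 0 = {0} ×ˢ (vectorIdeal I k : Set (Fin k → R)) := by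
    ext ⟨a, c⟩
    simp +contextual [dotPairs, ← funext_iff, ← Pi.zero_def, Ideal.mem_pi]
  rw [dotPairs_eq, Nat.card_coe_set_eq, Set.ncard_prod, Set.ncard_singleton, one_mul,
    ← card_vectorIdeal, ← Nat.card_coe_set_eq, SetLike.coe_sort_coe]

end Count

section LocalRing

variable {R : Type*} [CommRing R] [IsLocalRing R] [(maximalIdeal R).IsPrincipal]

lemma le_maximalIdeal_pow_succ_or_eq {i : ℕ} (K : Ideal R) (hK : K ≤ maximalIdeal R ^ i) :
    K ≤ maximalIdeal R ^ (i + 1) ∨ K = maximalIdeal R ^ i := by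
  obtain ⟨ϖ, hϖ⟩ := Submodule.IsPrincipal.principal (maximalIdeal R)
  rw [Ideal.submodule_span_eq] at hϖ
  refine or_iff_not_imp_left.2 fun hnot => hK.antisymm ?_
  obtain ⟨x, hxK, hx⟩ := SetLike.not_le_iff_exists.1 hnot
  simp only [hϖ, Ideal.span_singleton_pow] at hK hx ⊢
  obtain ⟨y, rfl⟩ := Ideal.mem_span_singleton'.1 (hK hxK)
  have isUnit_y : IsUnit y := by
    by_contra hy
    obtain ⟨z, rfl⟩ := Ideal.mem_span_singleton'.1 (hϖ ▸ (mem_maximalIdeal y).2 hy)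
    exact hx (Ideal.mem_span_singleton'.2 ⟨z, by ring⟩)
  rwa [Ideal.span_singleton_le_iff_mem, ← Ideal.unit_mul_mem_iff_mem K isUnit_y]

variable [Finite R]

-- Multiplication by `ϖ ^ i ≠ 0` maps `R` and `𝔪` onto `𝔪 ^ i` and `𝔪 ^ (i + 1)`, with the same
-- kernel, because units do not annihilate `ϖ ^ i`.
lemma card_maximalIdeal_pow_succ_mul {i : ℕ} (hi : maximalIdeal R ^ i ≠ ⊥) :
    Nat.card (maximalIdeal R ^ (i + 1) : Ideal R) * Nat.card (ResidueField R) =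
      Nat.card (maximalIdeal R ^ i : Ideal R) := by
  obtain ⟨ϖ, hϖ⟩ := Submodule.IsPrincipal.principal (maximalIdeal R)
  have span_eq : Ideal.span (Set.range ![ϖ ^ i]) = maximalIdeal R ^ i := by
    rw [hϖ, Ideal.submodule_span_eq, Ideal.span_singleton_pow, range_cons, range_empty,
      Set.union_empty]
  have pow_ne_zero : ϖ ^ i ≠ 0 := by
    rintro h
    simp [← span_eq, h] at hi
  have kernel_eq : dotKernel (maximalIdeal R) ![ϖ ^ i] = dotKernel ⊤ ![ϖ ^ i] := by
    ext c
    simp only [dotKernel, Ideal.mem_pi, Fin.forall_fin_one, Set.mem_ofPred_eq, Submodule.mem_top,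
      true_and, dotProduct, Fin.sum_univ_one, cons_val_zero, and_iff_right_iff_imp]
    exact fun h => (mem_maximalIdeal _).2 fun hu => pow_ne_zero (hu.mul_left_eq_zero.1 h)
  have count_maximal := card_dotKernel_mul_card (maximalIdeal R) ![ϖ ^ i]
  have count_top := card_dotKernel_mul_card ⊤ ![ϖ ^ i]
  rw [span_eq, kernel_eq, ← pow_succ', pow_one] at count_maximal
  rw [span_eq, Ideal.top_mul, pow_one, Nat.card_congr Submodule.topEquiv.toEquiv,
    (maximalIdeal R).card_eq_card_quotient_mul_card, ← count_maximal, mul_assoc] at count_top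
  exact (Nat.eq_of_mul_eq_mul_left (Nat.card_pos_iff.2 ⟨⟨0, by simp [dotKernel]⟩, inferInstance⟩)
    count_top).symm

lemma card_maximalIdeal_pow {q r : ℕ} (hq : Nat.card (ResidueField R) = q)
    (hcard : Nat.card R = q ^ r) {s t : ℕ} (hst : s + t = r) :
    Nat.card (maximalIdeal R ^ s : Ideal R) = q ^ t := by
  have : Finite (ResidueField R) := .of_surjective _ residue_surjective
  have one_lt_q : 1 < q := hq ▸ Finite.one_lt_card
  induction s generalizing t with
  | zero =>
    rw [pow_zero, Ideal.one_eq_top, Nat.card_congr Submodule.topEquiv.toEquiv, hcard, ← hst,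
      zero_add]
  | succ s ih =>
    have card_pow : Nat.card (maximalIdeal R ^ s : Ideal R) = q ^ (t + 1) := ih (by omega)
    have pow_ne_bot : maximalIdeal R ^ s ≠ ⊥ := by
      intro h
      rw [h, Nat.card_unique] at card_pow
      exact (Nat.one_lt_pow t.succ_ne_zero one_lt_q).ne card_pow
    have h := card_maximalIdeal_pow_succ_mul pow_ne_bot
    rw [card_pow, hq, pow_succ] at h
    exact Nat.eq_of_mul_eq_mul_right (by omega) h

theorem card_dotPairs_maximalIdeal_pow_add {q r : ℕ} (hq : Nat.card (ResidueField R) = q)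
    (hcard : Nat.card R = q ^ (r + 1)) (j : ℕ) {s t : ℕ} (hst : s + t = r + 1) :
    Nat.card (dotPairs (maximalIdeal R ^ s) (maximalIdeal R) (j + 1) 0) +
        q ^ (r * (j + 1)) * qInt t (q ^ j) =
      q ^ (r * (j + 1)) * (1 + q ^ (j + 1) * qInt t (q ^ j)) := by
  have : Finite (ResidueField R) := .of_surjective _ residue_surjective
  have q_pos : 0 < q := hq ▸ Nat.card_pos
  have card_max : Nat.card (maximalIdeal R) = q ^ r := by
    simpa using card_maximalIdeal_pow hq hcard (add_comm 1 r)
  induction t generalizing s with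
  | zero =>
    have pow_eq_bot : maximalIdeal R ^ s = ⊥ := by
      have card_one := card_maximalIdeal_pow hq hcard hst
      rw [pow_zero, Nat.card_eq_one_iff_unique] at card_one
      exact Submodule.subsingleton_iff_eq_bot.1 card_one.1
    rw [pow_eq_bot, card_dotPairs_bot, card_max, qInt, Finset.sum_range_zero, ← pow_mul]
    ring
  | succ t ih =>
    have descent := card_dotPairs_mul_card_add (Ideal.pow_le_pow_right (Nat.le_succ s))
      le_maximalIdeal_pow_succ_or_eq (maximalIdeal R) (j + 1)
    rw [← pow_succ', card_maximalIdeal_pow hq hcard hst,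
      card_maximalIdeal_pow (s := s + 1) (t := t) hq hcard (by omega), card_max] at descent
    have ih := ih (s := s + 1) (by omega)
    rw [qInt, Finset.sum_range_succ, ← qInt]
    refine Nat.eq_of_mul_eq_mul_right (pow_pos q_pos t) ?_
    zify at *
    linear_combination descent + (q : ℤ) ^ t * ih

end LocalRing

lemma qInt_succ (k q : ℕ) : qInt (k + 1) q = 1 + q * qInt k q := by
  simp only [qInt, Finset.sum_range_succ', pow_succ', Finset.mul_sum, pow_zero, add_comm]

theorem stmt14_general {R : Type*} [CommRing R] [Finite R] [IsLocalRing R]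
    [(maximalIdeal R).IsPrincipal] {q r m : ℕ} (hq : Nat.card (ResidueField R) = q)
    (hcard : Nat.card R = q ^ r) (hr : 2 ≤ r) (hm : 2 ≤ m) :
    Nat.card (etaTuples (maximalIdeal R) (2 * m) ((-1 : R) ^ m • 1)) =
      q ^ ((m - 1) * r) * qInt (r - 1) (q ^ (m - 2)) -
        q ^ ((m - 1) * r - 1) * qInt (r - 2) (q ^ (m - 2)) := by
  obtain ⟨s, rfl⟩ := Nat.exists_eq_add_of_le' hr
  obtain ⟨j, rfl⟩ := Nat.exists_eq_add_of_le' hm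
  have count := card_dotPairs_maximalIdeal_pow_add hq hcard j (s := 1) (t := s + 1) (by omega)
  have exponent_eq : (j + 1) * (s + 2) - 1 = (s + 1) * (j + 1) + j := by
    rw [show (j + 1) * (s + 2) = (s + 1) * (j + 1) + j + 1 by ring, Nat.add_sub_cancel]
  rw [card_etaTuples_neg_one_pow (maximalIdeal_le_jacobson _)]
  simp only [Nat.add_sub_cancel, Nat.add_succ_sub_one, exponent_eq]
  refine Nat.eq_sub_of_add_eq ?_
  rw [pow_one, qInt_succ] at count
  rw [qInt_succ]
  zify at count ⊢
  linear_combination count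

section ZMod

variable {p r : ℕ}

lemma isLocalRing_zmod_prime_pow [Fact p.Prime] (hr : r ≠ 0) : IsLocalRing (ZMod (p ^ r)) :=
  have : Fact (1 < p ^ r) := ⟨Nat.one_lt_pow hr (Fact.out : p.Prime).one_lt⟩
  .of_surjective' (PadicInt.toZModPow r) (ZMod.ringHom_surjective _)

lemma maximalIdeal_zmod_prime_pow [Fact p.Prime] [IsLocalRing (ZMod (p ^ r))] :
    maximalIdeal (ZMod (p ^ r)) = Ideal.span {(p : ZMod (p ^ r))} := by
  rw [← map_maximalIdeal_of_surjective (PadicInt.toZModPow r : ℤ_[p] →+* ZMod (p ^ r))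
    (ZMod.ringHom_surjective _), PadicInt.maximalIdeal_eq_span_p, Ideal.map_span,
    Set.image_singleton, map_natCast]

lemma card_residueField_zmod_prime_pow [Fact p.Prime] [IsLocalRing (ZMod (p ^ r))] (hr : r ≠ 0) :
    Nat.card (ResidueField (ZMod (p ^ r))) = p := by
  let toZModPrime := ZMod.castHom (dvd_pow_self p hr) (ZMod p)
  have surj : Function.Surjective toZModPrime := ZMod.ringHom_surjective _
  have e : ResidueField (ZMod (p ^ r)) ≃+* ZMod p :=
    (Ideal.quotEquivOfEq (ker_eq_maximalIdeal toZModPrime surj).symm).trans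
      (RingHom.quotientKerEquivOfSurjective surj)
  rw [Nat.card_congr e.toEquiv, Nat.card_zmod]

lemma sigmaCount_two_mul_self (p r m : ℕ) :
    sigmaCount p r (2 * m) r =
      Nat.card (etaTuples (Ideal.span {(p : ZMod (p ^ r))}) (2 * m)
        ((-1 : ZMod (p ^ r)) ^ m • 1)) := by
  have pow_eq_zero : (p : ZMod (p ^ r)) ^ r = 0 := by
    rw [← Nat.cast_pow, ZMod.natCast_self]
  have inverse_eq : Ring.inverse ((-1 : ZMod (p ^ r)) ^ m) = (-1) ^ m := by
    simpa using Ring.inverse_unit ((-1 : (ZMod (p ^ r))ˣ) ^ m)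
  have diag_eq : !![(-1 : ZMod (p ^ r)) ^ m, 0; 0, (-1) ^ m] = (-1 : ZMod (p ^ r)) ^ m • 1 := by
    simp [one_fin_two]
  rw [sigmaCount, Nat.mul_div_cancel_left m two_pos, pow_eq_zero, add_zero, inverse_eq, diag_eq]
  rfl

end ZMod

/-- For `m > 2`:
`σ_{2m}(r) = p^((m-1)r) · [r-1]_{p^(m-2)} - p^((m-1)r - 1) · [r-2]_{p^(m-2)}`. -/
theorem stmt14 (p r : ℕ) (hp : p.Prime) (hr : 2 ≤ r) (m : ℕ) (hm : 2 < m) :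
    sigmaCount p r (2 * m) r =
      p ^ ((m - 1) * r) * qInt (r - 1) (p ^ (m - 2)) -
        p ^ ((m - 1) * r - 1) * qInt (r - 2) (p ^ (m - 2)) := by
  have : Fact p.Prime := ⟨hp⟩
  have hr₀ : r ≠ 0 := by omega
  have := isLocalRing_zmod_prime_pow (p := p) hr₀
  have : (maximalIdeal (ZMod (p ^ r))).IsPrincipal := ⟨_, maximalIdeal_zmod_prime_pow⟩
  have : NeZero (p ^ r) := ⟨pow_ne_zero r hp.ne_zero⟩
  rw [sigmaCount_two_mul_self, ← maximalIdeal_zmod_prime_pow]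
  exact stmt14_general (card_residueField_zmod_prime_pow hr₀) (Nat.card_zmod _) hr hm.le
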